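/- arXiv:math/9809157 — 2 statements merged into one kernel-verified Lean document; each statement's English description precedes it below -/
import Mathlib

section
/- (Jacobi triple product, in the form of the paper's infinite product expansion of θ₁₁.) For every q ∈ ℂ with 0 < |q| < 1 and every z ∈ ℂ with z ≠ 0, one has F(z;q) = (q;q)_∞ · (z^{−1};q)_∞ · (qz;q)_∞, i.e. ∑_{n∈ℤ} (−1)^n q^{n(n+1)/2} z^n = ∏_{n=1}^∞ (1 − qⁿ) · ∏_{n=0}^∞ (1 − z^{−1} qⁿ) · ∏_{n=0}^∞ (1 − z q^{n+1}). -/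
/-- The reduced Jacobi theta function `F(z;q) = ∑_{n ∈ ℤ} (-1)^n q^{n(n+1)/2} z^n`. -/
noncomputable def F (q z : ℂ) : ℂ :=
  ∑' n : ℤ, (-1 : ℂ) ^ n * q ^ (n * (n + 1) / 2) * z ^ n


namespace JTP

open Filter Topology

/-- general term -/
noncomputable def G (q z : ℂ) (n : ℤ) : ℂ := (-1 : ℂ) ^ n * q ^ (n * (n + 1) / 2) * z ^ n

/-- finite q-factorial -/
noncomputable def P (q : ℂ) (m : ℕ) : ℂ := ∏ k ∈ Finset.range m, (1 - q ^ (k + 1))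

/-- inverse q-factorial extended by zero -/
noncomputable def R (q : ℂ) (m : ℤ) : ℂ := if m < 0 then 0 else (P q m.toNat)⁻¹

/-- term of the finite identity -/
noncomputable def T (q z : ℂ) (N : ℕ) (n : ℤ) : ℂ :=
  G q z n * (P q (2 * N) * (R q (N + n) * R q (N - n)))

lemma one_sub_ne {q : ℂ} (hq1 : ‖q‖ < 1) (k : ℕ) : 1 - q ^ (k + 1) ≠ 0 := by
  intro h
  have h1 : q ^ (k + 1) = 1 := (sub_eq_zero.mp h).symm
  have h2 : ‖q‖ ^ (k + 1) = 1 := by rw [← norm_pow, h1, norm_one]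
  have h3 : ‖q‖ ^ (k + 1) < 1 := pow_lt_one₀ (norm_nonneg _) hq1 (by omega)
  linarith

lemma P_ne {q : ℂ} (hq1 : ‖q‖ < 1) (m : ℕ) : P q m ≠ 0 :=
  Finset.prod_ne_zero_iff.mpr fun k _ => one_sub_ne hq1 k

lemma P_succ (q : ℂ) (m : ℕ) : P q (m + 1) = P q m * (1 - q ^ (m + 1)) :=
  Finset.prod_range_succ _ _

lemma R_rec {q : ℂ} (hq1 : ‖q‖ < 1) (m : ℤ) : R q m = (1 - q ^ (m + 1)) * R q (m + 1) := by
  rcases lt_trichotomy m (-1) with h | h | h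
  · simp [R, show m < 0 by omega, show m + 1 < 0 by omega]
  · subst h; simp [R]
  · obtain ⟨k, rfl⟩ := Int.eq_ofNat_of_zero_le (show 0 ≤ m by omega)
    have e1 : ((k : ℤ)).toNat = k := by simp
    have e2 : ((k : ℤ) + 1).toNat = k + 1 := by omega
    have h1 := one_sub_ne hq1 k
    have h2 := P_ne hq1 k
    rw [R, R, if_neg (by omega), if_neg (by omega), e1, e2, P_succ]
    have e3 : q ^ ((k : ℤ) + 1) = q ^ (k + 1) := by exact_mod_cast zpow_natCast q (k + 1)
    rw [e3]
    field_simp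

lemma G_succ {q z : ℂ} (hq : q ≠ 0) (hz : z ≠ 0) (n : ℤ) :
    G q z (n + 1) = -(q ^ (n + 1) * z * G q z n) := by
  have e : (n + 1) * (n + 1 + 1) / 2 = n * (n + 1) / 2 + (n + 1) := by
    rw [show (n + 1) * (n + 1 + 1) = n * (n + 1) + (n + 1) * 2 by ring]
    exact Int.add_mul_ediv_right _ _ (by norm_num)
  rw [G, G, e, zpow_add₀ hq, zpow_add_one₀ hz, zpow_add_one₀ (by norm_num : (-1 : ℂ) ≠ 0)]
  ring

lemma T_rec {q z : ℂ} (hq : q ≠ 0) (hq1 : ‖q‖ < 1) (hz : z ≠ 0) (N : ℕ) (n : ℤ) :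
    T q z (N + 1) n = (1 + q ^ (2 * N + 1)) * T q z N n - z⁻¹ * q ^ N * T q z N (n + 1)
      - z * q ^ (N + 1) * T q z N (n - 1) := by
  have g1 := G_succ hq hz n
  have g2 : G q z (n - 1) = -(z⁻¹ * (q ^ n)⁻¹ * G q z n) := by
    have := G_succ hq hz (n - 1)
    rw [sub_add_cancel] at this
    rw [this]
    have := zpow_ne_zero n hq
    field_simp
  have a1 : R q (N + n) = (1 - q ^ (N + n + 1 : ℤ)) * R q (N + n + 1) := R_rec hq1 _
  have a2 : R q (N - n) = (1 - q ^ (N - n + 1 : ℤ)) * R q (N - n + 1) := R_rec hq1 _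
  have a3 : R q (N + n - 1) = (1 - q ^ (N + n : ℤ)) * R q (N + n) := by
    have := R_rec hq1 (N + n - 1); rwa [sub_add_cancel] at this
  have a4 : R q (N - n - 1) = (1 - q ^ (N - n : ℤ)) * R q (N - n) := by
    have := R_rec hq1 (N - n - 1); rwa [sub_add_cancel] at this
  rw [a1] at a3
  rw [a2] at a4
  have p1 : P q (2 * (N + 1)) = P q (2 * N) * (1 - q ^ (2 * N + 1)) * (1 - q ^ (2 * N + 2)) := by
    rw [show 2 * (N + 1) = 2 * N + 1 + 1 by ring, P_succ, P_succ]
  unfold T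
  rw [g1, g2, p1]
  rw [show ((N + 1 : ℕ) : ℤ) + n = N + n + 1 by push_cast; ring,
    show ((N + 1 : ℕ) : ℤ) - n = N - n + 1 by push_cast; ring,
    show (N : ℤ) + (n + 1) = N + n + 1 by ring,
    show (N : ℤ) - (n + 1) = N - n - 1 by ring,
    show (N : ℤ) + (n - 1) = N + n - 1 by ring,
    show (N : ℤ) - (n - 1) = N - n + 1 by ring, a3, a4, a1, a2]
  generalize R q (N + n + 1) = r
  generalize R q (N - n + 1) = s
  generalize G q z n = g
  generalize P q (2 * N) = p
  have hx := zpow_ne_zero n hq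
  simp only [zpow_add₀ hq, zpow_sub₀ hq, zpow_natCast, zpow_one, pow_add, pow_mul', pow_one]
  generalize q ^ n = x at *
  generalize q ^ N = y at *
  field_simp
  ring

lemma finite_id {q z : ℂ} (hq : q ≠ 0) (hq1 : ‖q‖ < 1) (hz : z ≠ 0) (N : ℕ) :
    HasSum (T q z N) ((∏ k ∈ Finset.range N, (1 - z⁻¹ * q ^ k)) *
      ∏ k ∈ Finset.range N, (1 - z * q ^ (k + 1))) := by
  induction N with
  | zero =>
    have := hasSum_single (f := T q z 0) 0 (by
      intro n hn
      rcases lt_or_gt_of_ne hn with h | h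
      · simp [T, R, h]
      · simp [T, R, h])
    simpa [T, R, G, P] using this
  | succ N ih =>
    have h1 := (Equiv.addRight (1 : ℤ)).hasSum_iff.mpr ih
    have h2 := (Equiv.subRight (1 : ℤ)).hasSum_iff.mpr ih
    have := ((ih.mul_left (1 + q ^ (2 * N + 1))).sub (h1.mul_left (z⁻¹ * q ^ N))).sub
      (h2.mul_left (z * q ^ (N + 1)))
    have e := funext (T_rec hq hq1 hz N)
    change HasSum (fun n => T q z (N + 1) n) _
    rw [e]
    refine Eq.subst (motive := fun v => HasSum _ v) ?_ this
    rw [Finset.prod_range_succ, Finset.prod_range_succ]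
    generalize ∏ k ∈ Finset.range N, (1 - z⁻¹ * q ^ k) = A
    generalize ∏ k ∈ Finset.range N, (1 - z * q ^ (k + 1)) = B
    field_simp
    ring

lemma G_ne {q z : ℂ} (hq : q ≠ 0) (hz : z ≠ 0) (n : ℤ) : G q z n ≠ 0 :=
  mul_ne_zero (mul_ne_zero (zpow_ne_zero _ (by norm_num)) (zpow_ne_zero _ hq)) (zpow_ne_zero _ hz)

lemma G_summable {q z : ℂ} (hq : q ≠ 0) (hq1 : ‖q‖ < 1) (hz : z ≠ 0) : Summable (G q z) := by
  have hp := tendsto_pow_atTop_nhds_zero_of_lt_one (norm_nonneg q) hq1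
  apply Summable.of_nat_of_neg
  · refine summable_of_ratio_test_tendsto_lt_one (l := 0) one_pos
      (Eventually.of_forall fun n => G_ne hq hz _) ?_
    have : Tendsto (fun n : ℕ => ‖q‖ ^ (n + 1) * ‖z‖) atTop (𝓝 0) := by
      simpa using ((tendsto_add_atTop_iff_nat 1).mpr hp).mul_const ‖z‖
    refine this.congr fun n => ?_
    have h0 := norm_ne_zero_iff.mpr (G_ne hq hz n)
    push_cast
    rw [G_succ hq hz, norm_neg, norm_mul, norm_mul, mul_div_assoc, div_self h0, mul_one,
      norm_zpow]
    congr 1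
  · refine summable_of_ratio_test_tendsto_lt_one (l := 0) one_pos
      (Eventually.of_forall fun n => G_ne hq hz _) ?_
    have : Tendsto (fun n : ℕ => ‖q‖ ^ n * ‖z‖⁻¹) atTop (𝓝 0) := by
      simpa using hp.mul_const ‖z‖⁻¹
    refine this.congr fun n => ?_
    have h0 := norm_ne_zero_iff.mpr (G_ne hq hz (-((n + 1 : ℕ) : ℤ)))
    have e := G_succ hq hz (-((n + 1 : ℕ) : ℤ))
    rw [show -((n + 1 : ℕ) : ℤ) + 1 = -(n : ℤ) by push_cast; ring] at e
    rw [e, norm_neg, norm_mul, norm_mul, zpow_neg, zpow_natCast, norm_inv, norm_pow]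
    have := norm_ne_zero_iff.mpr hq
    have := norm_ne_zero_iff.mpr hz
    field_simp

lemma mult {q : ℂ} (hq1 : ‖q‖ < 1) (c : ℂ) : Multipliable fun n : ℕ => 1 - c * q ^ n := by
  have := multipliable_one_add_of_summable (f := fun n : ℕ => -(c * q ^ n)) (by
    simpa using (summable_geometric_of_lt_one (norm_nonneg _) hq1).mul_left ‖c‖)
  simpa [sub_eq_add_neg] using this

lemma mult' {q : ℂ} (hq1 : ‖q‖ < 1) (c : ℂ) : Multipliable fun n : ℕ => 1 - c * q ^ (n + 1) := by
  refine (mult hq1 (c * q)).congr fun n => ?_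
  ring

lemma mult1 {q : ℂ} (hq1 : ‖q‖ < 1) : Multipliable fun n : ℕ => 1 - q ^ (n + 1) := by
  simpa using mult' hq1 1

lemma L_ne {q : ℂ} (hq1 : ‖q‖ < 1) : ∏' n : ℕ, (1 - q ^ (n + 1)) ≠ 0 := by
  have := tprod_one_add_ne_zero_of_summable (f := fun n : ℕ => -(q ^ (n + 1)))
    (fun i => by simpa [sub_eq_add_neg] using one_sub_ne hq1 i)
    (by simpa using (summable_nat_add_iff 1).mpr (summable_geometric_of_lt_one (norm_nonneg _) hq1))
  simpa [sub_eq_add_neg] using this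

lemma P_tendsto {q : ℂ} (hq1 : ‖q‖ < 1) :
    Tendsto (P q) atTop (𝓝 (∏' n : ℕ, (1 - q ^ (n + 1)))) :=
  (mult1 hq1).tendsto_prod_tprod_nat

lemma R_tendsto {q : ℂ} (hq1 : ‖q‖ < 1) :
    Tendsto (R q) atTop (𝓝 (∏' n : ℕ, (1 - q ^ (n + 1)))⁻¹) := by
  have ht : Tendsto Int.toNat atTop atTop :=
    tendsto_atTop.mpr fun b => (eventually_ge_atTop (b : ℤ)).mono fun a ha => by omega
  refine (((P_tendsto hq1).inv₀ (L_ne hq1)).comp ht).congr' ?_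
  filter_upwards [eventually_ge_atTop 0] with m hm
  simp [R, not_lt.mpr hm]

lemma T_tendsto {q : ℂ} (hq1 : ‖q‖ < 1) (z : ℂ) (n : ℤ) :
    Tendsto (fun N => T q z N n) atTop (𝓝 (G q z n * (∏' n : ℕ, (1 - q ^ (n + 1)))⁻¹)) := by
  have hL := L_ne hq1
  have hc : Tendsto (fun N : ℕ => (N : ℤ)) atTop atTop := tendsto_natCast_atTop_atTop
  have h1 := (R_tendsto hq1).comp (tendsto_atTop_add_const_right _ n hc)
  have h2 := (R_tendsto hq1).comp (tendsto_atTop_add_const_right _ (-n) hc)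
  have h3 := (P_tendsto hq1).comp
    (tendsto_id.const_mul_atTop' (show 0 < 2 by norm_num) : Tendsto (fun N : ℕ => 2 * N) _ _)
  have := (h3.mul (h1.mul h2)).const_mul (G q z n)
  rw [mul_inv_cancel_left₀ hL] at this
  exact this

lemma bounds {q : ℂ} (hq1 : ‖q‖ < 1) :
    ∃ B : ℝ, 0 ≤ B ∧ (∀ m, ‖P q m‖ ≤ B) ∧ ∀ m, ‖R q m‖ ≤ B := by
  obtain ⟨A, hA⟩ := (P_tendsto hq1).norm.bddAbove_range
  obtain ⟨C, hC⟩ := ((P_tendsto hq1).inv₀ (L_ne hq1)).norm.bddAbove_range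
  have hA' : ∀ m, ‖P q m‖ ≤ A := fun m => hA ⟨m, rfl⟩
  have hC' : ∀ m, ‖(P q m)⁻¹‖ ≤ C := fun m => hC ⟨m, rfl⟩
  have h0 : 0 ≤ max A C := le_max_of_le_left ((norm_nonneg _).trans (hA' 0))
  refine ⟨max A C, h0, fun m => (hA' m).trans (le_max_left _ _), fun m => ?_⟩
  unfold R
  split_ifs
  · simpa using h0
  · exact (hC' _).trans (le_max_right _ _)

lemma main {q z : ℂ} (hq : q ≠ 0) (hq1 : ‖q‖ < 1) (hz : z ≠ 0) :
    ∑' n, G q z n = (∏' n : ℕ, (1 - q ^ (n + 1))) * (∏' n : ℕ, (1 - z⁻¹ * q ^ n)) *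
        ∏' n : ℕ, (1 - z * q ^ (n + 1)) := by
  obtain ⟨B, hB, hP, hR⟩ := bounds hq1
  have h1 := tendsto_tsum_of_dominated_convergence (𝓕 := atTop) (f := T q z)
    (bound := fun n => ‖G q z n‖ * (B * (B * B)))
    ((G_summable hq hq1 hz).norm.mul_right _) (T_tendsto hq1 z)
    (Eventually.of_forall fun N n => by
      unfold T
      rw [norm_mul, norm_mul, norm_mul]
      have := hP (2 * N)
      have := hR (N + n)
      have := hR (N - n)
      gcongr)
  have h2 := ((mult hq1 z⁻¹).tendsto_prod_tprod_nat).mul (mult' hq1 z).tendsto_prod_tprod_nat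
  have h3 := tendsto_nhds_unique h1 (h2.congr fun N => ((finite_id hq hq1 hz N).tsum_eq).symm)
  rw [tsum_mul_right] at h3
  rw [mul_assoc, ← h3]
  have := L_ne hq1
  field_simp

end JTP

/-- Jacobi triple product:
`F(z;q) = ∏_{n≥1}(1-qⁿ) · ∏_{n≥0}(1-z⁻¹qⁿ) · ∏_{n≥0}(1-zq^{n+1})`,
all three infinite products being convergent. -/
theorem stmt2 (q : ℂ) (hq0 : 0 < ‖q‖) (hq1 : ‖q‖ < 1) (z : ℂ) (hz : z ≠ 0) :
    (Multipliable fun n : ℕ => 1 - q ^ (n + 1)) ∧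
    (Multipliable fun n : ℕ => 1 - z⁻¹ * q ^ n) ∧
    (Multipliable fun n : ℕ => 1 - z * q ^ (n + 1)) ∧
    F q z = (∏' n : ℕ, (1 - q ^ (n + 1))) * (∏' n : ℕ, (1 - z⁻¹ * q ^ n)) *
        ∏' n : ℕ, (1 - z * q ^ (n + 1)) := by
  have hq : q ≠ 0 := norm_pos_iff.mp hq0
  exact ⟨JTP.mult1 hq1, JTP.mult hq1 _, JTP.mult' hq1 _, JTP.main hq hq1 hz⟩
end

section
/- (Jacobi derivative formula, in the form used in the paper's one-loop boson correlation function.) For every q ∈ ℂ with 0 < |q| < 1, the z-derivative of the reduced Jacobi theta function at z = 1 satisfies F'(1;q) = ((q;q)_∞)³, i.e. ∑_{n∈ℤ} (−1)^n n · q^{n(n+1)/2} = (∏_{n=1}^∞ (1 − qⁿ))³. Equivalently θ₁₁'(1;q) = i·η(q)³, where η(q) = q^{1/24}(q;q)_∞ is the Dedekind eta function. -/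
open Filter Topology

lemma aux_congr {f g : ℤ → ℂ} {a : ℂ} (h : ∀ n, f n = g n) (hg : HasSum g a) : HasSum f a := by
  rwa [funext h]

lemma aux_tri_succ (n : ℤ) : (n + 1) * (n + 1 + 1) / 2 = n * (n + 1) / 2 + (n + 1) := by
  rw [show (n + 1) * (n + 1 + 1) = n * (n + 1) + (n + 1) * 2 by ring]
  exact Int.add_mul_ediv_right _ _ (by norm_num)

lemma aux_summable_nat (ρ : ℝ) (h0 : 0 < ρ) (h1 : ρ < 1) :
    Summable (fun k : ℕ => ρ ^ ((k : ℤ) * (k + 1) / 2) * 2 ^ k) := by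
  apply summable_of_ratio_test_tendsto_lt_one (l := 0) (by norm_num)
  · exact Eventually.of_forall fun k => by positivity
  · have : Tendsto (fun k : ℕ => 2 * ρ ^ (k + 1)) atTop (𝓝 0) := by
      have := ((tendsto_pow_atTop_nhds_zero_of_lt_one h0.le h1).comp
        (tendsto_add_atTop_nat 1)).const_mul 2
      simpa using this
    refine this.congr fun k => ?_
    have hp : (0 : ℝ) < ρ ^ ((k : ℤ) * (k + 1) / 2) := by positivity
    rw [Real.norm_of_nonneg (by positivity), Real.norm_of_nonneg (by positivity)]
    push_cast
    rw [aux_tri_succ, zpow_add₀ h0.ne']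
    rw [eq_div_iff (by positivity)]
    have : ρ ^ ((k : ℤ) + 1) = ρ ^ (k + 1) := by exact_mod_cast zpow_natCast ρ (k + 1)
    rw [this]
    ring

lemma aux_summable (ρ : ℝ) (h0 : 0 < ρ) (h1 : ρ < 1) :
    Summable (fun n : ℤ => ρ ^ (n * (n + 1) / 2) * 2 ^ n.natAbs) := by
  apply Summable.of_nat_of_neg_add_one
  · simpa using aux_summable_nat ρ h0 h1
  · refine ((aux_summable_nat ρ h0 h1).mul_left 2).congr fun k => ?_
    have e1 : (-((k : ℤ) + 1)).natAbs = k + 1 := by omega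
    have e2 : -((k : ℤ) + 1) * (-((k : ℤ) + 1) + 1) = k * (k + 1) := by ring
    rw [e1, e2]; ring

lemma aux_zpow_bound (x : ℝ) (h1 : 1 / 2 ≤ x) (h2 : x ≤ 2) (n : ℤ) :
    x ^ n ≤ 2 ^ n.natAbs := by
  have hx : 0 < x := by linarith
  obtain ⟨k, rfl | rfl⟩ := n.eq_nat_or_neg
  · simpa using pow_le_pow_left₀ hx.le h2 k
  · have : x⁻¹ ≤ 2 := by
      rw [inv_le_comm₀ hx (by norm_num)]; linarith
    simpa using pow_le_pow_left₀ (inv_pos.2 hx).le this k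

lemma aux_deriv (q : ℂ) (hq0 : 0 < ‖q‖) (hq1 : ‖q‖ < 1) :
    HasSum (fun n : ℤ => (-1 : ℂ) ^ n * (n : ℂ) * q ^ (n * (n + 1) / 2)) (deriv (F q) 1) := by
  have hb : ∀ w ∈ Metric.ball (1 : ℂ) (1 / 2), 1 / 2 ≤ ‖w‖ ∧ ‖w‖ ≤ 2 := by
    intro w hw
    rw [Metric.mem_ball, dist_eq_norm] at hw
    have a1 := norm_sub_norm_le w 1
    have a2 := norm_sub_norm_le 1 w
    rw [norm_sub_rev] at a2
    simp only [norm_one] at a1 a2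
    constructor <;> linarith
  have := Complex.hasSum_deriv_of_summable_norm (z := 1) (U := Metric.ball (1 : ℂ) (1 / 2))
    (F := fun (n : ℤ) (z : ℂ) => (-1 : ℂ) ^ n * q ^ (n * (n + 1) / 2) * z ^ n)
    (aux_summable ‖q‖ hq0 hq1) ?_ Metric.isOpen_ball ?_ (by simp)
  · refine aux_congr ?_ (this)
    intro n
    simp [deriv_const_mul_field]
    ring
  · intro n w hw
    have hw0 : w ≠ 0 := by
      have := (hb w hw).1
      intro h; rw [h] at this; norm_num at this
    exact (((differentiableAt_zpow.2 (Or.inl hw0)).const_mul _)).differentiableWithinAt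
  · intro n w hw
    simp only [norm_mul, norm_zpow, norm_neg, norm_one, one_zpow, one_mul]
    exact mul_le_mul_of_nonneg_left (aux_zpow_bound _ (hb w hw).1 (hb w hw).2 n) (by positivity)

noncomputable def auxP (q : ℂ) (m : ℕ) : ℂ := ∏ i ∈ Finset.range m, (1 - q ^ (i + 1))

noncomputable def auxR (q : ℂ) (m : ℤ) : ℂ := if 0 ≤ m then (auxP q m.toNat)⁻¹ else 0

lemma aux_ne (q : ℂ) (hq1 : ‖q‖ < 1) (i : ℕ) : 1 - q ^ (i + 1) ≠ 0 := by
  intro h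
  have h2 : ‖q ^ (i + 1)‖ = 1 := by rw [← sub_eq_zero.1 h]; simp
  rw [norm_pow] at h2
  have := pow_lt_one₀ (norm_nonneg q) hq1 (Nat.succ_ne_zero i)
  exact absurd h2 this.ne

lemma auxP_ne (q : ℂ) (hq1 : ‖q‖ < 1) (m : ℕ) : auxP q m ≠ 0 :=
  Finset.prod_ne_zero_iff.2 fun i _ => aux_ne q hq1 i

lemma auxP_succ (q : ℂ) (m : ℕ) : auxP q (m + 1) = auxP q m * (1 - q ^ (m + 1)) :=
  Finset.prod_range_succ _ _

lemma auxR_rec (q : ℂ) (hq1 : ‖q‖ < 1) (m m' : ℤ) (h : m = m' + 1) :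
    auxR q m' = (1 - q ^ m) * auxR q m := by
  subst h
  rcases lt_trichotomy m' (-1) with h | h | h
  · simp [auxR, show ¬ (0 ≤ m') by omega, show ¬ (0 ≤ m' + 1) by omega]
  · subst h; simp [auxR]
  · lift m' to ℕ using by omega
    have e : ((m' : ℤ) + 1).toNat = m' + 1 := by omega
    have e2 : q ^ ((m' : ℤ) + 1) = q ^ (m' + 1) := by exact_mod_cast zpow_natCast q (m' + 1)
    simp only [auxR, e, e2, show (0 : ℤ) ≤ m' by omega, show (0 : ℤ) ≤ m' + 1 by omega, if_true,
      auxP_succ, Int.toNat_natCast]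
    have := aux_ne q hq1 m'
    have := auxP_ne q hq1 m'
    field_simp

lemma aux_sum_q (q : ℂ) (hq1 : ‖q‖ < 1) : Summable (fun n : ℕ => ‖-q ^ (n + 1)‖) := by
  simpa using (summable_nat_add_iff 1).mpr (summable_geometric_of_lt_one (norm_nonneg _) hq1)

lemma auxP_tendsto (q : ℂ) (hq1 : ‖q‖ < 1) :
    Tendsto (auxP q) atTop (𝓝 (∏' n : ℕ, (1 - q ^ (n + 1)))) := by
  have : Multipliable (fun n : ℕ => 1 - q ^ (n + 1)) := by
    simpa [sub_eq_add_neg] using multipliable_one_add_of_summable (aux_sum_q q hq1)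
  exact this.tendsto_prod_tprod_nat

lemma auxP_lim_ne (q : ℂ) (hq1 : ‖q‖ < 1) : (∏' n : ℕ, (1 - q ^ (n + 1))) ≠ 0 := by
  have := tprod_one_add_ne_zero_of_summable (f := fun n : ℕ => -q ^ (n + 1))
    (fun i => by simpa [sub_eq_add_neg] using aux_ne q hq1 i) (aux_sum_q q hq1)
  simpa [sub_eq_add_neg] using this

lemma auxR_tendsto (q : ℂ) (hq1 : ‖q‖ < 1) :
    Tendsto (auxR q) atTop (𝓝 (∏' n : ℕ, (1 - q ^ (n + 1)))⁻¹) := by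
  have h : Tendsto Int.toNat atTop atTop := by
    refine tendsto_atTop.2 fun b => ?_
    filter_upwards [eventually_ge_atTop (b : ℤ)] with a ha
    omega
  refine (((auxP_tendsto q hq1).comp h).inv₀ (auxP_lim_ne q hq1)).congr' ?_
  filter_upwards [eventually_ge_atTop 0] with a ha
  simp [auxR, ha]

lemma auxR_bdd (q : ℂ) (hq1 : ‖q‖ < 1) : ∃ C : ℝ, 0 ≤ C ∧ ∀ m, ‖auxR q m‖ ≤ C := by
  obtain ⟨C, hC⟩ := (Metric.isBounded_range_of_tendsto _
    ((auxP_tendsto q hq1).inv₀ (auxP_lim_ne q hq1))).exists_norm_le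
  have hC' : ∀ m, ‖(auxP q m)⁻¹‖ ≤ C := fun m => hC _ ⟨m, rfl⟩
  have hC0 : 0 ≤ C := (norm_nonneg _).trans (hC' 0)
  refine ⟨C, hC0, fun m => ?_⟩
  unfold auxR
  split_ifs
  · exact hC' _
  · simpa using hC0

noncomputable def auxB (q : ℂ) (N n : ℤ) : ℂ :=
  (-1 : ℂ) ^ n * q ^ (n * (n + 1) / 2) * (auxR q (N - n) * auxR q (N + n + 1))

lemma auxB_rec (q : ℂ) (hq0 : q ≠ 0) (hq1 : ‖q‖ < 1) (N n : ℤ) :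
    (1 - q ^ (2 * N + 3)) * (1 - q ^ (2 * N + 2)) * auxB q (N + 1) n =
    (1 + q ^ (2 * N + 2)) * auxB q N n
      - q ^ (N + 1) * (auxB q N (n + -1) + auxB q N (n + 1)) := by
  have hm : (-1 : ℂ) ≠ 0 := by norm_num
  have r1 := auxR_rec q hq1 (N + 1 - n) (N - n) (by ring)
  have r2 := auxR_rec q hq1 (N - n) (N - (n + 1)) (by ring)
  have r3 := auxR_rec q hq1 (N + 1 + n + 1) (N + n + 1) (by ring)
  have r4 := auxR_rec q hq1 (N + n + 1) (N + (n + -1) + 1) (by ring)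
  have t1 := aux_tri_succ n
  have t2 : n * (n + 1) / 2 = (n + -1) * (n + -1 + 1) / 2 + n := by
    have := aux_tri_succ (n + -1)
    simpa using this
  have t2' : (n + -1) * (n + -1 + 1) / 2 = n * (n + 1) / 2 + -n := by omega
  unfold auxB
  rw [t1, t2', show N - (n + -1) = N + 1 - n by ring, show N + (n + 1) + 1 = N + 1 + n + 1 by ring,
    r4, r2, r1, r3]
  simp only [zpow_add₀ hq0, zpow_add₀ hm, zpow_sub₀ hq0, zpow_neg, zpow_mul, zpow_one]
  generalize auxR q (N + 1 - n) = A
  generalize auxR q (N + 1 + n + 1) = B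
  generalize q ^ (n * (n + 1) / 2) = T
  have hx : q ^ N ≠ 0 := zpow_ne_zero _ hq0
  have hy : q ^ n ≠ 0 := zpow_ne_zero _ hq0
  have e2 : (q ^ (2 : ℤ)) ^ N = (q ^ N) ^ 2 := by
    rw [← zpow_mul, ← zpow_natCast, ← zpow_mul]; congr 1; push_cast; ring
  have e3 : q ^ (3 : ℤ) = q ^ 3 := by norm_cast
  have e4 : q ^ (2 : ℤ) = q ^ 2 := by norm_cast
  rw [e2, e3, e4]
  generalize q ^ N = x at *
  generalize q ^ n = y at *
  generalize (-1 : ℂ) ^ n = s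
  field_simp
  ring

lemma auxB_le (q : ℂ) (C : ℝ) (hC0 : 0 ≤ C) (hC : ∀ m, ‖auxR q m‖ ≤ C) (N n : ℤ) :
    ‖auxB q N n‖ ≤ ‖q ^ (n * (n + 1) / 2)‖ * C ^ 2 := by
  unfold auxB
  simp only [norm_mul, norm_zpow, norm_neg, norm_one, one_zpow, one_mul]
  rw [sq]
  have := mul_le_mul (hC (N - n)) (hC (N + n + 1)) (norm_nonneg _) hC0
  exact mul_le_mul_of_nonneg_left this (by positivity)

lemma aux_sum0 (q : ℂ) (hq0 : 0 < ‖q‖) (hq1 : ‖q‖ < 1) :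
    Summable (fun n : ℤ => ‖q ^ (n * (n + 1) / 2)‖) := by
  refine Summable.of_nonneg_of_le (fun _ => norm_nonneg _) (fun n => ?_)
    (aux_summable ‖q‖ hq0 hq1)
  rw [norm_zpow]
  exact le_mul_of_one_le_right (by positivity) (one_le_pow₀ (by norm_num))

lemma aux_sum1 (q : ℂ) (hq0 : 0 < ‖q‖) (hq1 : ‖q‖ < 1) :
    Summable (fun n : ℤ => ‖(n : ℂ)‖ * ‖q ^ (n * (n + 1) / 2)‖) := by
  refine (aux_deriv q hq0 hq1).summable.norm.congr fun n => ?_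
  simp

lemma auxB_summable (q : ℂ) (hq0 : 0 < ‖q‖) (hq1 : ‖q‖ < 1) (N : ℤ) :
    Summable (fun n : ℤ => auxB q N n) := by
  obtain ⟨C, hC0, hC⟩ := auxR_bdd q hq1
  exact Summable.of_norm_bounded ((aux_sum0 q hq0 hq1).mul_right (C ^ 2))
    (auxB_le q C hC0 hC N)

lemma auxB_le' (q : ℂ) (C : ℝ) (hC0 : 0 ≤ C) (hC : ∀ m, ‖auxR q m‖ ≤ C) (N n : ℤ) :
    ‖(n : ℂ) * auxB q N n‖ ≤ ‖(n : ℂ)‖ * ‖q ^ (n * (n + 1) / 2)‖ * C ^ 2 := by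
  rw [norm_mul, mul_assoc]
  exact mul_le_mul_of_nonneg_left (auxB_le q C hC0 hC N n) (norm_nonneg _)

lemma auxB_summable' (q : ℂ) (hq0 : 0 < ‖q‖) (hq1 : ‖q‖ < 1) (N : ℤ) :
    Summable (fun n : ℤ => (n : ℂ) * auxB q N n) := by
  obtain ⟨C, hC0, hC⟩ := auxR_bdd q hq1
  exact Summable.of_norm_bounded ((aux_sum1 q hq0 hq1).mul_right (C ^ 2))
    (auxB_le' q C hC0 hC N)

lemma auxB_step (q : ℂ) (hq0 : 0 < ‖q‖) (hq1 : ‖q‖ < 1) (N : ℤ) :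
    (1 - q ^ (2 * N + 3)) * (1 - q ^ (2 * N + 2)) * ∑' n : ℤ, (n : ℂ) * auxB q (N + 1) n =
    (1 - q ^ (N + 1)) ^ 2 * ∑' n : ℤ, (n : ℂ) * auxB q N n := by
  have hq : q ≠ 0 := norm_pos_iff.1 hq0
  have h0 := (auxB_summable q hq0 hq1 N).hasSum
  have h1 := (auxB_summable' q hq0 hq1 N).hasSum
  have h2 := (auxB_summable' q hq0 hq1 (N + 1)).hasSum
  set s := ∑' n : ℤ, (n : ℂ) * auxB q N n
  set t := ∑' n : ℤ, auxB q N n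
  have k1 : HasSum (fun n : ℤ => (n : ℂ) * auxB q N (n + 1)) (s - t) := by
    refine aux_congr ?_ (((Equiv.addRight (1 : ℤ)).hasSum_iff.2 (h1.sub h0)))
    intro n
    simp
    ring
  have k2 : HasSum (fun n : ℤ => (n : ℂ) * auxB q N (n + -1)) (s + t) := by
    refine aux_congr ?_ (((Equiv.addRight (-1 : ℤ)).hasSum_iff.2 (h1.add h0)))
    intro n
    simp
    ring
  have k3 := (h1.mul_left (1 + q ^ (2 * N + 2))).sub ((k2.add k1).mul_left (q ^ (N + 1)))
  have k4 := h2.mul_left ((1 - q ^ (2 * N + 3)) * (1 - q ^ (2 * N + 2)))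
  have e : q ^ (2 * N + 2) = (q ^ (N + 1)) ^ 2 := by
    rw [← zpow_natCast, ← zpow_mul]; congr 1; push_cast; ring
  refine (k4.unique (aux_congr ?_ k3)).trans ?_
  · intro n
    linear_combination (n : ℂ) * auxB_rec q hq hq1 N n
  · rw [e]; ring

lemma auxB_zero (q : ℂ) : ∑' n : ℤ, (n : ℂ) * auxB q 0 n = (1 - q)⁻¹ := by
  rw [tsum_eq_single (-1)]
  · simp [auxB, auxR, auxP]
  · intro n hn
    rcases lt_trichotomy n 0 with h | h | h
    · simp [auxB, auxR, show ¬ (0 ≤ n + 1) by omega]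
    · simp [h]
    · simp [auxB, auxR, show ¬ (n ≤ 0) by omega]

lemma auxB_fin (q : ℂ) (hq0 : 0 < ‖q‖) (hq1 : ‖q‖ < 1) (N : ℕ) :
    auxP q (2 * N + 1) * ∑' n : ℤ, (n : ℂ) * auxB q N n = auxP q N ^ 2 := by
  induction N with
  | zero =>
    have := aux_ne q hq1 0
    have h := auxB_zero q
    simp only [Nat.cast_zero] at *
    rw [h]
    simp [auxP] at *
    exact mul_inv_cancel₀ this
  | succ N ih =>
    have h := auxB_step q hq0 hq1 N
    have e1 : q ^ (2 * (N : ℤ) + 3) = q ^ (2 * N + 2 + 1) := by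
      exact_mod_cast zpow_natCast q (2 * N + 3)
    have e2 : q ^ (2 * (N : ℤ) + 2) = q ^ (2 * N + 1 + 1) := by
      exact_mod_cast zpow_natCast q (2 * N + 2)
    have e3 : q ^ ((N : ℤ) + 1) = q ^ (N + 1) := by
      exact_mod_cast zpow_natCast q (N + 1)
    rw [e1, e2, e3] at h
    rw [show 2 * (N + 1) + 1 = 2 * N + 1 + 1 + 1 by ring, auxP_succ, auxP_succ, auxP_succ q N]
    push_cast
    linear_combination auxP q (2 * N + 1) * h + (1 - q ^ (N + 1)) ^ 2 * ih

lemma aux_main (q : ℂ) (hq0 : 0 < ‖q‖) (hq1 : ‖q‖ < 1) :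
    ∑' n : ℤ, (-1 : ℂ) ^ n * (n : ℂ) * q ^ (n * (n + 1) / 2)
      = (∏' n : ℕ, (1 - q ^ (n + 1))) ^ 3 := by
  obtain ⟨C, hC0, hC⟩ := auxR_bdd q hq1
  have hP := auxP_tendsto q hq1
  have hR := auxR_tendsto q hq1
  have hne := auxP_lim_ne q hq1
  set E := ∏' n : ℕ, (1 - q ^ (n + 1))
  have hc : Tendsto (fun N : ℕ => (N : ℤ)) atTop atTop := tendsto_natCast_atTop_atTop
  have L : Tendsto (fun N : ℕ => ∑' n : ℤ, (n : ℂ) * auxB q N n) atTop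
      (𝓝 (∑' n : ℤ, ((-1 : ℂ) ^ n * (n : ℂ) * q ^ (n * (n + 1) / 2)) * (E⁻¹ * E⁻¹))) := by
    refine tendsto_tsum_of_dominated_convergence ((aux_sum1 q hq0 hq1).mul_right (C ^ 2)) ?_
      (Eventually.of_forall fun N n => auxB_le' q C hC0 hC N n)
    intro n
    have a1 : Tendsto (fun N : ℕ => auxR q (N - n)) atTop (𝓝 E⁻¹) :=
      hR.comp (tendsto_atTop_add_const_right _ (-n) hc)
    have a2 : Tendsto (fun N : ℕ => auxR q (N + n + 1)) atTop (𝓝 E⁻¹) :=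
      hR.comp (tendsto_atTop_add_const_right _ 1 (tendsto_atTop_add_const_right _ n hc))
    refine ((a1.mul a2).const_mul ((-1 : ℂ) ^ n * (n : ℂ) * q ^ (n * (n + 1) / 2))).congr ?_
    intro N
    unfold auxB
    ring
  rw [tsum_mul_right] at L
  have h2 : Tendsto (fun N : ℕ => 2 * N + 1) atTop atTop :=
    tendsto_atTop_mono (fun N => by simp only [id]; omega) tendsto_id
  have L2 := (hP.comp h2).mul L
  have L3 := hP.pow 2
  have := tendsto_nhds_unique (L2.congr fun N => auxB_fin q hq0 hq1 N) L3
  field_simp at this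
  linear_combination this

/-- Jacobi derivative formula: `F'(1;q) = ((q;q)_∞)³`, i.e.
`∑_{n∈ℤ} (-1)^n n q^{n(n+1)/2} = (∏_{n≥1}(1-qⁿ))³`. -/
theorem stmt4 (q : ℂ) (hq0 : 0 < ‖q‖) (hq1 : ‖q‖ < 1) :
    deriv (F q) 1 = (∏' n : ℕ, (1 - q ^ (n + 1))) ^ 3 ∧
    ∑' n : ℤ, (-1 : ℂ) ^ n * (n : ℂ) * q ^ (n * (n + 1) / 2)
      = (∏' n : ℕ, (1 - q ^ (n + 1))) ^ 3 := by
  refine ⟨?_, aux_main q hq0 hq1⟩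
  rw [← aux_main q hq0 hq1]
  exact (aux_deriv q hq0 hq1).tsum_eq.symm
end
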